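/- arXiv:1708.04307 — 6 statements merged into one kernel-verified Lean document; each statement's English description precedes it below -/
import Mathlib

section
/- Let x : ℝ → ℝ³ be a Kepler solution on an open interval I (i.e. x is twice differentiable on I, x(t) ≠ 0 for t ∈ I, and x''(t) = −(G·M/4)·x(t)/‖x(t)‖³ on I, with constants G, M > 0). Then the energy E₁(t) := (1/2)‖x'(t)‖² − G·M/(4‖x(t)‖) is constant on I; that is, E₁(t) = E₁(s) for all t, s ∈ I. -/
open MeasureTheory

/-!
The acceleration `-(k / ‖x‖³) x` is minus the gradient of the potential `-k / ‖x‖`. For a force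
with potential `V`, the derivative of `½ ‖v‖² + V(x)` along a trajectory is `⟪v, a⟫ + V'(x) v`,
which vanishes because `V'(x) = -⟪a, ·⟫`; a function with zero derivative on an interval is
constant.
-/

section NormedSpace

variable {F : Type*} [NormedAddCommGroup F] [NormedSpace ℝ F]

theorem eq_of_hasDerivWithinAt_zero {f : ℝ → F} {I : Set ℝ} (hI : I.OrdConnected)
    (hf : ∀ t ∈ I, HasDerivWithinAt f 0 I t) {t s : ℝ} (ht : t ∈ I) (hs : s ∈ I) :
    f t = f s := by
  have norm_sub_le : ‖f t - f s‖ ≤ 0 * ‖t - s‖ :=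
    hI.convex.norm_image_sub_le_of_norm_hasDerivWithin_le hf (fun _ _ ↦ norm_zero.le) hs ht
  rwa [zero_mul, norm_le_zero_iff, sub_eq_zero] at norm_sub_le

end NormedSpace

section InnerProductSpace

variable {E : Type*} [NormedAddCommGroup E] [InnerProductSpace ℝ E]

theorem hasFDerivAt_norm_of_ne_zero {y : E} (hy : y ≠ 0) :
    HasFDerivAt (fun z : E ↦ ‖z‖) (‖y‖⁻¹ • innerSL ℝ y) y := by
  have hasFDerivAt_sqrt_norm_sq :=
    (hasStrictFDerivAt_norm_sq y).hasFDerivAt.sqrt (pow_ne_zero 2 (norm_ne_zero_iff.mpr hy))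
  simp only [Real.sqrt_sq (norm_nonneg _)] at hasFDerivAt_sqrt_norm_sq
  refine hasFDerivAt_sqrt_norm_sq.congr_fderiv ?_
  ext w
  simp only [smul_apply, coe_innerSL_apply, nsmul_eq_mul, Nat.cast_ofNat, smul_eq_mul]
  field_simp

theorem hasFDerivAt_neg_div_norm (k : ℝ) {y : E} (hy : y ≠ 0) :
    HasFDerivAt (fun z : E ↦ -k / ‖z‖) (-innerSL ℝ ((-k / ‖y‖ ^ 3) • y)) y := by
  have hnorm : ‖y‖ ≠ 0 := norm_ne_zero_iff.mpr hy
  have hasDerivAt_neg_div : HasDerivAt (fun r : ℝ ↦ -k / r) (k / ‖y‖ ^ 2) ‖y‖ := by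
    simpa [div_eq_mul_inv] using (hasDerivAt_inv hnorm).const_mul (-k)
  refine (hasDerivAt_neg_div.comp_hasFDerivAt y (hasFDerivAt_norm_of_ne_zero hy)).congr_fderiv ?_
  ext w
  simp only [smul_apply, coe_innerSL_apply, smul_eq_mul, map_smul, neg_apply]
  field_simp

variable {x v : ℝ → E} {I : Set ℝ}

theorem hasDerivWithinAt_kinetic_add_potential {V : E → ℝ} {a : E} {t : ℝ}
    (hx : HasDerivWithinAt x (v t) I t) (hv : HasDerivWithinAt v a I t)
    (hV : HasFDerivAt V (-innerSL ℝ a) (x t)) :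
    HasDerivWithinAt (fun u ↦ (1 / 2) * ‖v u‖ ^ 2 + V (x u)) 0 I t := by
  have kinetic := hv.norm_sq.const_mul (1 / 2)
  have potential := hV.comp_hasDerivWithinAt t hx
  refine (kinetic.add potential).congr_deriv ?_
  simp [real_inner_comm]

theorem kinetic_add_potential_eq {V : E → ℝ} {a : ℝ → E} (hI : I.OrdConnected)
    (hx : ∀ t ∈ I, HasDerivWithinAt x (v t) I t) (hv : ∀ t ∈ I, HasDerivWithinAt v (a t) I t)
    (hV : ∀ t ∈ I, HasFDerivAt V (-innerSL ℝ (a t)) (x t)) {t s : ℝ} (ht : t ∈ I) (hs : s ∈ I) :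
    (1 / 2) * ‖v t‖ ^ 2 + V (x t) = (1 / 2) * ‖v s‖ ^ 2 + V (x s) :=
  eq_of_hasDerivWithinAt_zero (f := fun u ↦ (1 / 2) * ‖v u‖ ^ 2 + V (x u)) hI
    (fun u hu ↦ hasDerivWithinAt_kinetic_add_potential (hx u hu) (hv u hu) (hV u hu)) ht hs

theorem kepler_energy_conserved_general {k : ℝ} (hI : I.OrdConnected)
    (hx : ∀ t ∈ I, HasDerivWithinAt x (v t) I t) (hx0 : ∀ t ∈ I, x t ≠ 0)
    (hv : ∀ t ∈ I, HasDerivWithinAt v ((-k / ‖x t‖ ^ 3) • x t) I t)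
    {t s : ℝ} (ht : t ∈ I) (hs : s ∈ I) :
    (1 / 2) * ‖v t‖ ^ 2 - k / ‖x t‖ = (1 / 2) * ‖v s‖ ^ 2 - k / ‖x s‖ := by
  simpa only [neg_div, ← sub_eq_add_neg] using
    kinetic_add_potential_eq hI hx hv (fun u hu ↦ hasFDerivAt_neg_div_norm k (hx0 u hu)) ht hs

end InnerProductSpace

/-- Conservation of energy for the Kepler two-body problem: along any Kepler solution
`x` on an open interval `I` (i.e. `x` twice differentiable, nonvanishing, satisfying
`x'' = -(G M / 4) x / ‖x‖³` on `I`), the energy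
`E₁(t) = (1/2)‖x'(t)‖² - G M/(4‖x(t)‖)` is constant. -/
theorem kepler_energy_conserved
    (G M : ℝ) (hG : 0 < G) (hM : 0 < M)
    (I : Set ℝ) (hIopen : IsOpen I) (hIconn : I.OrdConnected)
    (x : ℝ → EuclideanSpace ℝ (Fin 3))
    (hx1 : ∀ t ∈ I, DifferentiableAt ℝ x t)
    (hx2 : ∀ t ∈ I, DifferentiableAt ℝ (deriv x) t)
    (hx0 : ∀ t ∈ I, x t ≠ 0)
    (hode : ∀ t ∈ I, deriv (deriv x) t = (-(G * M / 4) / ‖x t‖ ^ 3) • x t)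
    (t s : ℝ) (ht : t ∈ I) (hs : s ∈ I) :
    (1 / 2) * ‖deriv x t‖ ^ 2 - G * M / (4 * ‖x t‖)
      = (1 / 2) * ‖deriv x s‖ ^ 2 - G * M / (4 * ‖x s‖) := by
  simpa only [div_div] using kepler_energy_conserved_general (k := G * M / 4) hIconn
    (fun u hu ↦ (hx1 u hu).hasDerivAt.hasDerivWithinAt) hx0
    (fun u hu ↦ hode u hu ▸ (hx2 u hu).hasDerivAt.hasDerivWithinAt) ht hs
end

section
/- Let x : ℝ → ℝ³ be a Kepler solution on an open interval I (i.e. x is twice differentiable on I, x(t) ≠ 0 for t ∈ I, and x''(t) = −(G·M/4)·x(t)/‖x(t)‖³ on I, with constants G, M > 0). Then the angular momentum J(t) := x(t) × x'(t) is constant on I; that is, J(t) = J(s) for all t, s ∈ I. -/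
/-- The cross product on `ℝ³ = EuclideanSpace ℝ (Fin 3)`. -/
noncomputable def cross3 (a b : EuclideanSpace ℝ (Fin 3)) : EuclideanSpace ℝ (Fin 3) :=
  (EuclideanSpace.equiv (Fin 3) ℝ).symm
    ![a 1 * b 2 - a 2 * b 1, a 2 * b 0 - a 0 * b 2, a 0 * b 1 - a 1 * b 0]

/-- The cross product `cross3` as a continuous bilinear map, so that calculus for bilinear maps
applies to it. It is transported from Mathlib's `crossProduct` on `Fin 3 → ℝ`, and is continuous
because the space is finite-dimensional. -/
noncomputable def cross3Bilin :
    EuclideanSpace ℝ (Fin 3) →L[ℝ] EuclideanSpace ℝ (Fin 3) →L[ℝ] EuclideanSpace ℝ (Fin 3) :=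
  let e := (EuclideanSpace.equiv (Fin 3) ℝ).toLinearEquiv
  ((crossProduct.compl₁₂ e.toLinearMap e.toLinearMap).compr₂
    e.symm.toLinearMap).toContinuousBilinearMap

theorem cross3Bilin_apply (a b : EuclideanSpace ℝ (Fin 3)) : cross3Bilin a b = cross3 a b := rfl

theorem cross3Bilin_self (a : EuclideanSpace ℝ (Fin 3)) : cross3Bilin a a = 0 :=
  congrArg (WithLp.toLp 2) (cross_self a.ofLp)

section CentralForce

variable {𝕜 E F : Type*} [RCLike 𝕜] [NormedAddCommGroup E] [NormedSpace 𝕜 E]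
  [NormedAddCommGroup F] [NormedSpace 𝕜 F] {B : E →L[𝕜] E →L[𝕜] F} {x : 𝕜 → E}

theorem hasDerivAt_bilin_deriv_zero_of_central {t c : 𝕜} (hB : ∀ v, B v v = 0)
    (hx : DifferentiableAt 𝕜 x t) (hx' : DifferentiableAt 𝕜 (deriv x) t)
    (hcentral : deriv (deriv x) t = c • x t) :
    HasDerivAt (fun u => B (x u) (deriv x u)) 0 t := by
  have hleibniz := B.hasDerivAt_of_bilinear (fun _ => hx.hasDerivAt) (fun _ => hx'.hasDerivAt)
  have hzero : B (x t) (deriv (deriv x) t) + B (deriv x t) (deriv x t) = 0 := by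
    rw [hcentral, map_smul, hB, hB, smul_zero, add_zero]
  exact hleibniz.congr_deriv hzero

/-- The alternating map `B` plays the role of the cross product; taking for it the wedge product
`E × E → ⋀² E` gives the angular momentum in any finite dimension. -/
theorem kepler_angular_momentum_conserved_general {I : Set 𝕜} {c : 𝕜 → 𝕜} {s t : 𝕜}
    (hB : ∀ v, B v v = 0) (hIopen : IsOpen I) (hIconn : IsPreconnected I)
    (hx : ∀ u ∈ I, DifferentiableAt 𝕜 x u) (hx' : ∀ u ∈ I, DifferentiableAt 𝕜 (deriv x) u)
    (hcentral : ∀ u ∈ I, deriv (deriv x) u = c u • x u) (ht : t ∈ I) (hs : s ∈ I) :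
    B (x t) (deriv x t) = B (x s) (deriv x s) := by
  have hderiv (u : 𝕜) (hu : u ∈ I) : HasDerivAt (fun r => B (x r) (deriv x r)) 0 u :=
    hasDerivAt_bilin_deriv_zero_of_central hB (hx u hu) (hx' u hu) (hcentral u hu)
  exact hIopen.is_const_of_deriv_eq_zero hIconn
    (fun u hu => (hderiv u hu).differentiableAt.differentiableWithinAt)
    (fun u hu => (hderiv u hu).deriv) ht hs

end CentralForce

/-- Conservation of angular momentum for the Kepler two-body problem: along any Kepler
solution `x` on an open interval `I` (twice differentiable, nonvanishing, satisfying
`x'' = -(G M / 4) x / ‖x‖³` on `I`), the angular momentum `J(t) = x(t) × x'(t)` is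
constant. -/
theorem kepler_angular_momentum_conserved
    (G M : ℝ) (hG : 0 < G) (hM : 0 < M)
    (I : Set ℝ) (hIopen : IsOpen I) (hIconn : I.OrdConnected)
    (x : ℝ → EuclideanSpace ℝ (Fin 3))
    (hx1 : ∀ t ∈ I, DifferentiableAt ℝ x t)
    (hx2 : ∀ t ∈ I, DifferentiableAt ℝ (deriv x) t)
    (hx0 : ∀ t ∈ I, x t ≠ 0)
    (hode : ∀ t ∈ I, deriv (deriv x) t = (-(G * M / 4) / ‖x t‖ ^ 3) • x t)
    (t s : ℝ) (ht : t ∈ I) (hs : s ∈ I) :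
    cross3 (x t) (deriv x t) = cross3 (x s) (deriv x s) := by
  simpa only [cross3Bilin_apply] using kepler_angular_momentum_conserved_general
    cross3Bilin_self hIopen hIconn.isPreconnected hx1 hx2 hode ht hs
end

section
/- Let x : ℝ → ℝ³ be a Kepler solution on an open interval I (twice differentiable, x(t) ≠ 0, x''(t) = −(G·M/4)·x(t)/‖x(t)‖³ on I, with G, M > 0). Then the eccentricity vector e(t) := (4/(G·M))·( x'(t) × (x(t) × x'(t)) − (G·M/(4‖x(t)‖))·x(t) ) is constant on I; that is, e(t) = e(s) for all t, s ∈ I. -/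
/-!
For a motion `x' = v`, `v' = c • x` under a central force, the vector `v × (x × v)` changes at rate
`-c • (‖x‖² • v - ⟪x, v⟫ • x)`, while the unit vector `x / ‖x‖` always changes at rate
`‖x‖⁻³ • (‖x‖² • v - ⟪x, v⟫ • x)`. The inverse-square law `c = -k / ‖x‖³` is exactly the one for
which `v × (x × v)` and `(k / ‖x‖) • x` change at the same rate. Since
`v × (x × v) = ‖v‖² • x - ⟪x, v⟫ • v`, the cancellation takes place in any inner product space.
-/

open scoped Matrix RealInnerProductSpace

lemma cross3_eq_toLp_crossProduct (a b : EuclideanSpace ℝ (Fin 3)) :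
    cross3 a b = WithLp.toLp 2 (a.ofLp ⨯₃ b.ofLp) := by
  rw [cross_apply]
  rfl

lemma cross3_cross3 (a b c : EuclideanSpace ℝ (Fin 3)) :
    cross3 a (cross3 b c) = ⟪a, c⟫ • b - ⟪a, b⟫ • c := by
  simp only [cross3_eq_toLp_crossProduct, cross_cross_eq_smul_sub_smul', WithLp.toLp_sub,
    WithLp.toLp_smul, WithLp.toLp_ofLp, EuclideanSpace.inner_eq_star_dotProduct, star_trivial,
    dotProduct_comm a.ofLp c.ofLp]

lemma eq_of_hasDerivWithinAt_zero_s3 {E : Type*} [NormedAddCommGroup E] [NormedSpace ℝ E]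
    {f : ℝ → E} {s : Set ℝ} (hs : s.OrdConnected) (hf : ∀ u ∈ s, HasDerivWithinAt f 0 s u)
    {a b : ℝ} (ha : a ∈ s) (hb : b ∈ s) : f a = f b := by
  have hle : ‖f a - f b‖ ≤ 0 * ‖a - b‖ :=
    hs.convex.norm_image_sub_le_of_norm_hasDerivWithin_le hf (fun _ _ => norm_zero.le) hb ha
  rwa [zero_mul, norm_le_zero_iff, sub_eq_zero] at hle

section InnerProductSpace

variable {E : Type*} [NormedAddCommGroup E] [InnerProductSpace ℝ E]

/-- The Laplace–Runge–Lenz vector `v × (x × v) - (k / ‖x‖) • x` of a body at position `x` with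
velocity `v` under the acceleration `-(k / ‖x‖ ^ 3) • x`. The double cross product is expanded, so
that the definition makes sense in every inner product space. -/
noncomputable def laplaceRungeLenz (k : ℝ) (x v : E) : E :=
  ‖v‖ ^ 2 • x - ⟪x, v⟫ • v - (k / ‖x‖) • x

lemma cross3_cross3_sub_eq_laplaceRungeLenz (k : ℝ) (x v : EuclideanSpace ℝ (Fin 3)) :
    cross3 v (cross3 x v) - (k / ‖x‖) • x = laplaceRungeLenz k x v := by
  rw [cross3_cross3, laplaceRungeLenz, real_inner_self_eq_norm_sq, real_inner_comm]

variable {x v : ℝ → E} {I : Set ℝ} {t : ℝ}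

lemma hasDerivWithinAt_norm {x' : E} (hx : HasDerivWithinAt x x' I t) (hx0 : x t ≠ 0) :
    HasDerivWithinAt (fun u => ‖x u‖) (⟪x t, x'⟫ / ‖x t‖) I t := by
  have hsqrt := hx.norm_sq.sqrt (pow_ne_zero 2 (norm_ne_zero_iff.mpr hx0))
  simp only [Real.sqrt_sq (norm_nonneg _)] at hsqrt
  exact hsqrt.congr_deriv (mul_div_mul_left _ _ two_ne_zero)

lemma hasDerivWithinAt_inv_norm_smul {x' : E} (hx : HasDerivWithinAt x x' I t) (hx0 : x t ≠ 0) :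
    HasDerivWithinAt (fun u => ‖x u‖⁻¹ • x u)
      ((‖x t‖ ^ 3)⁻¹ • (‖x t‖ ^ 2 • x' - ⟪x t, x'⟫ • x t)) I t := by
  have hr : ‖x t‖ ≠ 0 := norm_ne_zero_iff.mpr hx0
  refine (((hasDerivWithinAt_norm hx hx0).fun_inv hr).fun_smul hx).congr_deriv ?_
  match_scalars <;> field_simp

lemma hasDerivWithinAt_norm_sq_smul_sub_inner_smul_of_central {c : ℝ}
    (hx : HasDerivWithinAt x (v t) I t) (hv : HasDerivWithinAt v (c • x t) I t) :
    HasDerivWithinAt (fun u => ‖v u‖ ^ 2 • x u - ⟪x u, v u⟫ • v u)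
      (-c • (‖x t‖ ^ 2 • v t - ⟪x t, v t⟫ • x t)) I t := by
  refine ((hv.norm_sq.fun_smul hx).fun_sub ((hx.inner ℝ hv).fun_smul hv)).congr_deriv ?_
  simp only [inner_smul_right, real_inner_self_eq_norm_sq, real_inner_comm (x t) (v t)]
  match_scalars <;> ring

lemma hasDerivWithinAt_laplaceRungeLenz {k : ℝ} (hx : HasDerivWithinAt x (v t) I t)
    (hv : HasDerivWithinAt v ((-k / ‖x t‖ ^ 3) • x t) I t) (hx0 : x t ≠ 0) :
    HasDerivWithinAt (fun u => laplaceRungeLenz k (x u) (v u)) 0 I t := by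
  have hcross := hasDerivWithinAt_norm_sq_smul_sub_inner_smul_of_central hx hv
  have hunit := (hasDerivWithinAt_inv_norm_smul hx hx0).fun_const_smul k
  simp only [smul_smul, ← div_eq_mul_inv] at hunit
  refine (hcross.fun_sub hunit).congr_deriv ?_
  rw [neg_div, neg_neg, sub_self]

theorem kepler_eccentricity_conserved_general {k : ℝ} (hI : I.OrdConnected)
    (hx : ∀ u ∈ I, HasDerivWithinAt x (v u) I u)
    (hv : ∀ u ∈ I, HasDerivWithinAt v ((-k / ‖x u‖ ^ 3) • x u) I u)
    (hx0 : ∀ u ∈ I, x u ≠ 0) {s : ℝ} (ht : t ∈ I) (hs : s ∈ I) :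
    laplaceRungeLenz k (x t) (v t) = laplaceRungeLenz k (x s) (v s) :=
  eq_of_hasDerivWithinAt_zero_s3 hI
    (fun u hu => hasDerivWithinAt_laplaceRungeLenz (hx u hu) (hv u hu) (hx0 u hu)) ht hs

end InnerProductSpace

/-- Conservation of the eccentricity (Laplace–Runge–Lenz) vector
`e(t) = (4/(G M)) • (x'(t) × (x(t) × x'(t)) - (G M/(4‖x(t)‖)) • x(t))`
along any Kepler solution. -/
theorem kepler_eccentricity_conserved
    (G M : ℝ) (hG : 0 < G) (hM : 0 < M)
    (I : Set ℝ) (hIopen : IsOpen I) (hIconn : I.OrdConnected)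
    (x : ℝ → EuclideanSpace ℝ (Fin 3))
    (hx1 : ∀ t ∈ I, DifferentiableAt ℝ x t)
    (hx2 : ∀ t ∈ I, DifferentiableAt ℝ (deriv x) t)
    (hx0 : ∀ t ∈ I, x t ≠ 0)
    (hode : ∀ t ∈ I, deriv (deriv x) t = (-(G * M / 4) / ‖x t‖ ^ 3) • x t)
    (t s : ℝ) (ht : t ∈ I) (hs : s ∈ I) :
    (4 / (G * M)) • (cross3 (deriv x t) (cross3 (x t) (deriv x t))
        - (G * M / (4 * ‖x t‖)) • x t)
      = (4 / (G * M)) • (cross3 (deriv x s) (cross3 (x s) (deriv x s))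
        - (G * M / (4 * ‖x s‖)) • x s) := by
  have h := kepler_eccentricity_conserved_general hIconn
    (fun u hu => (hx1 u hu).hasDerivAt.hasDerivWithinAt)
    (fun u hu => hode u hu ▸ (hx2 u hu).hasDerivAt.hasDerivWithinAt) hx0 ht hs
  simp only [← div_div, cross3_cross3_sub_eq_laplaceRungeLenz, h]
end

section
/- For p > 0 set λ₊(p) := 1/( p/4 + √(p²/16 + 1) ) (the positive root of λ² + (p/2)λ − 1 = 0) and define the scattering integral I(p) := ∫_{λ₊(p)}^{∞} dλ / ( λ·√(λ² + (p/2)λ − 1) ). Then: (i) for every p > 0 the integrand is integrable on (λ₊(p), ∞), so I(p) is finite; (ii) lim_{p → 0⁺} 2·I(p) = π, equivalently the scattering angle α(p) := 2·I(p) − π tends to 0; and (iii) lim_{p → ∞} 2·I(p) = 2π, equivalently α(p) tends to π. -/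
open MeasureTheory Filter

/-- `λ₊(p)`, the positive root of `λ² + (p/2)λ - 1 = 0`. -/
noncomputable def lamPlus (p : ℝ) : ℝ := 1 / (p / 4 + Real.sqrt (p ^ 2 / 16 + 1))

/-- The scattering integral `I(p) = ∫_{λ₊(p)}^∞ dλ/(λ √(λ² + (p/2)λ - 1))`. -/
noncomputable def scatteringIntegral (p : ℝ) : ℝ :=
  ∫ l in Set.Ioi (lamPlus p), 1 / (l * Real.sqrt (l ^ 2 + (p / 2) * l - 1))

/-!
On the Kepler conic `1 / r = a + D cos φ` the polar angle `φ`, measured from the periapsis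
`r = 1 / (a + D)`, satisfies `dφ / dr = 1 / (r √((D² - a²) r² + 2 a r - 1))`. Hence the integral of
the right-hand side from the periapsis to infinity is the angle `arccos (-a / D)` of the asymptote.
The scattering integral is the case `a = p / 4`, `D² = a² + 1`, where this angle is
`π / 2 + arctan (p / 4)`, and the limits are those of `arctan`.
-/

open Real Set Topology

/-- The true anomaly: the polar angle, measured from the periapsis, of the point at distance `r`
from the focus on the conic `1 / r = a + D cos φ`. -/
noncomputable def trueAnomaly (a D r : ℝ) : ℝ := arccos ((r⁻¹ - a) / D)

namespace trueAnomaly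

variable {a D r : ℝ}

lemma apply_periapsis (hD : D ≠ 0) : trueAnomaly a D (a + D)⁻¹ = 0 := by
  rw [trueAnomaly, inv_inv, add_sub_cancel_left, div_self hD, arccos_one]

lemma continuousAt (hr : r ≠ 0) : ContinuousAt (trueAnomaly a D) r :=
  continuous_arccos.continuousAt.comp
    (((continuousAt_inv₀ hr).sub continuousAt_const).div_const D)

lemma tendsto_atTop (a D : ℝ) : Tendsto (trueAnomaly a D) atTop (𝓝 (arccos (-a / D))) := by
  have hcos : Tendsto (fun r : ℝ => (r⁻¹ - a) / D) atTop (𝓝 (-a / D)) := by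
    simpa only [zero_sub] using (tendsto_inv_atTop_zero.sub_const a).div_const D
  exact (continuous_arccos.tendsto _).comp hcos

lemma radicand_eq (hD : D ≠ 0) (hr : r ≠ 0) :
    (D ^ 2 - a ^ 2) * r ^ 2 + 2 * a * r - 1 = (r * D) ^ 2 * (1 - ((r⁻¹ - a) / D) ^ 2) := by
  field_simp
  ring

lemma hasDerivAt (ha : -D < a) (ha' : a ≤ D) (hr : (a + D)⁻¹ < r) :
    HasDerivAt (trueAnomaly a D) (1 / (r * √((D ^ 2 - a ^ 2) * r ^ 2 + 2 * a * r - 1))) r := by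
  have hD : 0 < D := by linarith
  have hperi : 0 < a + D := by linarith
  have hr₀ : 0 < r := (inv_pos.2 hperi).trans hr
  have hinv : r⁻¹ < a + D := inv_lt_of_inv_lt₀ hperi hr
  have hinv₀ : 0 < r⁻¹ := inv_pos.2 hr₀
  have hcos_lt : (r⁻¹ - a) / D < 1 := by rw [div_lt_one hD]; linarith
  have hlt_cos : -1 < (r⁻¹ - a) / D := by rw [lt_div_iff₀ hD]; linarith
  have hcos : HasDerivAt (fun s : ℝ => (s⁻¹ - a) / D) (-(r ^ 2)⁻¹ / D) r :=
    ((hasDerivAt_inv hr₀.ne').sub_const a).div_const D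
  have hsin : 0 < √(1 - ((r⁻¹ - a) / D) ^ 2) := sqrt_pos.2 (by nlinarith)
  refine ((hasDerivAt_arccos hlt_cos.ne' hcos_lt.ne).comp r hcos).congr_deriv ?_
  rw [radicand_eq hD.ne' hr₀.ne', sqrt_mul (sq_nonneg _), sqrt_sq (by positivity)]
  generalize √(1 - ((r⁻¹ - a) / D) ^ 2) = sinφ at hsin ⊢
  field_simp

lemma deriv_nonneg (ha : -D < a) (hr : (a + D)⁻¹ < r) :
    0 ≤ 1 / (r * √((D ^ 2 - a ^ 2) * r ^ 2 + 2 * a * r - 1)) := by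
  have hr₀ : 0 < r := (inv_pos.2 (by linarith)).trans hr
  positivity

lemma integrableOn_deriv (ha : -D < a) (ha' : a ≤ D) :
    IntegrableOn (fun r => 1 / (r * √((D ^ 2 - a ^ 2) * r ^ 2 + 2 * a * r - 1)))
      (Ioi (a + D)⁻¹) :=
  integrableOn_Ioi_deriv_of_nonneg
    (continuousAt (inv_ne_zero (by linarith))).continuousWithinAt
    (fun _ hr => hasDerivAt ha ha' hr) (fun _ hr => deriv_nonneg ha hr) (tendsto_atTop a D)

lemma integral_deriv (ha : -D < a) (ha' : a ≤ D) :
    ∫ r in Ioi (a + D)⁻¹, 1 / (r * √((D ^ 2 - a ^ 2) * r ^ 2 + 2 * a * r - 1)) =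
      arccos (-a / D) := by
  have hD : D ≠ 0 := by linarith
  rw [integral_Ioi_of_hasDerivAt_of_nonneg
    (continuousAt (inv_ne_zero (by linarith))).continuousWithinAt
    (fun _ hr => hasDerivAt ha ha' hr) (fun _ hr => deriv_nonneg ha hr) (tendsto_atTop a D),
    apply_periapsis hD, sub_zero]

end trueAnomaly

lemma arccos_neg_div_sqrt_sq_add_one (a : ℝ) :
    arccos (-a / √(a ^ 2 + 1)) = π / 2 + arctan a := by
  rw [arccos, neg_div, arcsin_neg, sub_neg_eq_add, arctan_eq_arcsin, add_comm (a ^ 2)]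

lemma lamPlus_eq_inv (p : ℝ) : lamPlus p = (p / 4 + √((p / 4) ^ 2 + 1))⁻¹ := by
  rw [lamPlus, one_div, div_pow]
  norm_num

lemma scattering_radicand_eq (p l : ℝ) :
    l ^ 2 + p / 2 * l - 1 =
      (√((p / 4) ^ 2 + 1) ^ 2 - (p / 4) ^ 2) * l ^ 2 + 2 * (p / 4) * l - 1 := by
  rw [sq_sqrt (by positivity)]
  ring

lemma integrableOn_scattering_integrand (p : ℝ) :
    IntegrableOn (fun l => 1 / (l * √(l ^ 2 + p / 2 * l - 1))) (Ioi (lamPlus p)) := by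
  have hlower : -√((p / 4) ^ 2 + 1) < p / 4 := neg_sqrt_lt_of_sq_lt (lt_add_one _)
  have hupper : p / 4 < √((p / 4) ^ 2 + 1) := lt_sqrt_of_sq_lt (lt_add_one _)
  simpa only [lamPlus_eq_inv, scattering_radicand_eq]
    using trueAnomaly.integrableOn_deriv hlower hupper.le

lemma scatteringIntegral_eq (p : ℝ) : scatteringIntegral p = π / 2 + arctan (p / 4) := by
  have hlower : -√((p / 4) ^ 2 + 1) < p / 4 := neg_sqrt_lt_of_sq_lt (lt_add_one _)
  have hupper : p / 4 < √((p / 4) ^ 2 + 1) := lt_sqrt_of_sq_lt (lt_add_one _)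
  simp only [scatteringIntegral, lamPlus_eq_inv, scattering_radicand_eq]
  rw [trueAnomaly.integral_deriv hlower hupper.le, arccos_neg_div_sqrt_sq_add_one]

lemma two_mul_scatteringIntegral (p : ℝ) :
    2 * scatteringIntegral p = π + 2 * arctan (p / 4) := by
  rw [scatteringIntegral_eq]
  ring

lemma tendsto_two_mul_scatteringIntegral_zero :
    Tendsto (fun p => 2 * scatteringIntegral p) (𝓝 0) (𝓝 π) := by
  simp only [two_mul_scatteringIntegral]
  have hcont : Continuous fun p : ℝ => π + 2 * arctan (p / 4) := by fun_prop
  simpa using hcont.tendsto 0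

lemma tendsto_two_mul_scatteringIntegral_atTop :
    Tendsto (fun p => 2 * scatteringIntegral p) atTop (𝓝 (2 * π)) := by
  simp only [two_mul_scatteringIntegral]
  have harctan : Tendsto (fun p : ℝ => arctan (p / 4)) atTop (𝓝 (π / 2)) :=
    (tendsto_nhds_of_tendsto_nhdsWithin tendsto_arctan_atTop).comp
      (tendsto_id.atTop_div_const four_pos)
  convert (harctan.const_mul 2).const_add π using 2
  ring

/-- A negative `p` corresponds to a repulsive force. -/
theorem scattering_angle_limits_general :
    (∀ p : ℝ, IntegrableOn (fun l => 1 / (l * √(l ^ 2 + (p / 2) * l - 1))) (Ioi (lamPlus p))) ∧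
    Tendsto (fun p => 2 * scatteringIntegral p) (𝓝 0) (𝓝 π) ∧
    Tendsto (fun p => 2 * scatteringIntegral p) atTop (𝓝 (2 * π)) :=
  ⟨integrableOn_scattering_integrand, tendsto_two_mul_scatteringIntegral_zero,
    tendsto_two_mul_scatteringIntegral_atTop⟩

/-- (i) The scattering integrand is integrable on `(λ₊(p), ∞)` for every `p > 0`;
(ii) as `p → 0⁺`, `2 I(p) → π` (scattering angle `α = 2I(p) - π → 0`);
(iii) as `p → ∞`, `2 I(p) → 2π` (scattering angle `α → π`). -/
theorem scattering_angle_limits :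
    (∀ p : ℝ, 0 < p →
      IntegrableOn (fun l => 1 / (l * Real.sqrt (l ^ 2 + (p / 2) * l - 1)))
        (Set.Ioi (lamPlus p))) ∧
    Tendsto (fun p => 2 * scatteringIntegral p) (nhdsWithin 0 (Set.Ioi 0))
      (nhds Real.pi) ∧
    Tendsto (fun p => 2 * scatteringIntegral p) atTop (nhds (2 * Real.pi)) := by
  obtain ⟨hint, hzero, htop⟩ := scattering_angle_limits_general
  exact ⟨fun p _ => hint p, hzero.mono_left nhdsWithin_le_nhds, htop⟩
end

section
/- Let B ⊂ ℝ³ be a bounded measurable set. Then the vector-valued function (x, y) ↦ (x − y)/‖x − y‖³ is (Bochner) integrable on B × B with respect to Lebesgue measure, and ∫_B ∫_B (x − y)/‖x − y‖³ dy dx = 0. (In particular, a body exerts no net gravitational force on itself: ∫_B ∇ψ(x) dx = 0 where ∇ψ(x) = Gρ∫_B (x−y)/‖x−y‖³ dy.) -/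
open MeasureTheory

/-!
Newton's third law: the force kernel is odd, so exchanging `x` and `y` negates the integrand, and
the double integral over `B ×ˢ B` equals its own negative. For integrability, split the kernel
`z ↦ z / ‖z‖ ^ s` at the unit sphere. Outside the unit ball it is bounded. Inside, its norm
`‖z‖ ^ (1 - s)` is integrable because `s - 1` is less than the dimension, and by translation
invariance its integral over `x` does not depend on the base point `y`.
-/

open Module Metric Set

section Antisymmetric

variable {α F : Type*} [MeasurableSpace α] {μ : Measure α} [SFinite μ]
  [NormedAddCommGroup F] [NormedSpace ℝ F]

theorem setIntegral_prod_self_eq_zero_of_swap_eq_neg {f : α × α → F}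
    (hf : ∀ p, f p.swap = -f p) (s : Set α) :
    ∫ p in s ×ˢ s, f p ∂μ.prod μ = 0 := by
  have : IsAddTorsionFree F := .of_isTorsionFree ℝ F
  rw [← self_eq_neg, ← integral_neg, ← setIntegral_prod_swap]
  simp_rw [hf]

end Antisymmetric

section DifferenceKernel

variable {G F : Type*} [AddGroup G] [MeasurableSpace G] [MeasurableAdd₂ G] [MeasurableNeg G]
  [NormedAddCommGroup F] {μ : Measure G} [SFinite μ] [μ.IsAddRightInvariant] {K : G → F}

theorem integrable_comp_sub_prod (hK : Integrable K μ) (ν : Measure G) [IsFiniteMeasure ν] :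
    Integrable (fun p : G × G ↦ K (p.1 - p.2)) (μ.prod ν) := by
  have hmeas : AEStronglyMeasurable (fun p : G × G ↦ K (p.1 - p.2)) (μ.prod ν) :=
    hK.aestronglyMeasurable.comp_quasiMeasurePreserving
      (quasiMeasurePreserving_sub_of_right_invariant μ ν)
  refine (integrable_prod_iff' hmeas).2 ⟨.of_forall hK.comp_sub_right, ?_⟩
  simp only [integral_sub_right_eq_self (fun z ↦ ‖K z‖)]
  exact integrable_const _

theorem integrableOn_prod_comp_sub_of_norm_le {C : ℝ} (hmeas : AEStronglyMeasurable K μ)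
    (hbound : ∀ z, ‖K z‖ ≤ C) {s t : Set G} (hs : μ s ≠ ⊤) (ht : μ t ≠ ⊤) :
    IntegrableOn (fun p : G × G ↦ K (p.1 - p.2)) (s ×ˢ t) (μ.prod μ) := by
  have hst : μ.prod μ (s ×ˢ t) < ⊤ := by
    rw [Measure.prod_prod]
    exact ENNReal.mul_lt_top hs.lt_top ht.lt_top
  exact .of_bound hst
    (hmeas.comp_quasiMeasurePreserving
      (quasiMeasurePreserving_sub_of_right_invariant μ μ)).restrict
    C (.of_forall fun p ↦ hbound (p.1 - p.2))

theorem integrableOn_prod_comp_sub {U : Set G} {C : ℝ} (hU : MeasurableSet U)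
    (hmeas : AEStronglyMeasurable K μ) (hint : IntegrableOn K U μ) (hbound : ∀ z ∉ U, ‖K z‖ ≤ C)
    {s t : Set G} (hs : μ s ≠ ⊤) (ht : μ t ≠ ⊤) :
    IntegrableOn (fun p : G × G ↦ K (p.1 - p.2)) (s ×ˢ t) (μ.prod μ) := by
  have hnear : IntegrableOn (fun p : G × G ↦ U.indicator K (p.1 - p.2)) (s ×ˢ t) (μ.prod μ) := by
    have : IsFiniteMeasure (μ.restrict t) := isFiniteMeasure_restrict.2 ht
    have hstrip := integrable_comp_sub_prod ((integrable_indicator_iff hU).2 hint) (μ.restrict t)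
    rw [IntegrableOn, ← Measure.prod_restrict]
    exact hstrip.mono_measure (Measure.prod_mono Measure.restrict_le_self le_rfl)
  have hfar : IntegrableOn (fun p : G × G ↦ Uᶜ.indicator K (p.1 - p.2)) (s ×ˢ t) (μ.prod μ) := by
    refine integrableOn_prod_comp_sub_of_norm_le (C := max C 0) (hmeas.indicator hU.compl)
      (fun z ↦ ?_) hs ht
    by_cases hz : z ∈ U
    · simp [hz]
    · simp [hz, hbound z hz]
  refine (hnear.add hfar).congr (.of_forall fun p ↦ ?_)
  exact congrFun (indicator_self_add_compl U K) (p.1 - p.2)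

end DifferenceKernel

section InversePowerKernel

variable {E : Type*} [NormedAddCommGroup E] [NormedSpace ℝ E]

/-- The central force field `z / ‖z‖ ^ s`, of magnitude `‖z‖ ^ (1 - s)`; Newtonian gravity in `ℝ³`
is the case `s = 3`. Its value at the singularity `z = 0` is `0`. -/
noncomputable def inversePowerKernel (s : ℝ) (z : E) : E :=
  (‖z‖ ^ s)⁻¹ • z

theorem inversePowerKernel_neg (s : ℝ) (z : E) :
    inversePowerKernel s (-z) = -inversePowerKernel s z := by
  simp [inversePowerKernel]

theorem norm_inversePowerKernel_le (s : ℝ) (z : E) :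
    ‖inversePowerKernel s z‖ ≤ ‖z‖ ^ (-(s - 1)) := by
  rcases eq_or_ne z 0 with rfl | hz
  · simpa [inversePowerKernel] using Real.rpow_nonneg le_rfl _
  · have hz' : 0 < ‖z‖ := norm_pos_iff.2 hz
    refine le_of_eq ?_
    calc ‖inversePowerKernel s z‖ = ‖z‖ ^ (-s) * ‖z‖ := by
          rw [inversePowerKernel, norm_smul, Real.rpow_neg hz'.le,
            Real.norm_of_nonneg (by positivity)]
      _ = ‖z‖ ^ (-(s - 1)) := by
          rw [← Real.rpow_add_one hz'.ne']
          ring_nf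

theorem norm_inversePowerKernel_le_one {s : ℝ} (hs : 1 ≤ s) {z : E} (hz : 1 ≤ ‖z‖) :
    ‖inversePowerKernel s z‖ ≤ 1 :=
  (norm_inversePowerKernel_le s z).trans
    (Real.rpow_le_one_of_one_le_of_nonpos hz (by linarith))

variable [MeasurableSpace E] [BorelSpace E]

theorem measurable_inversePowerKernel (s : ℝ) :
    Measurable (inversePowerKernel s : E → E) := by
  unfold inversePowerKernel
  fun_prop

variable [FiniteDimensional ℝ E] {μ : Measure E} [μ.IsAddHaarMeasure]

theorem integrableOn_ball_inversePowerKernel [Nontrivial E] {s : ℝ} (hs : s < finrank ℝ E + 1)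
    (r : ℝ) : IntegrableOn (inversePowerKernel s) (ball (0 : E) r) μ :=
  integrableOn_ball_of_norm_le_rpow (C := 1) (α := s - 1) finrank_pos (by linarith)
    (.of_forall fun z ↦ by simpa only [one_mul] using norm_inversePowerKernel_le s z)
    (measurable_inversePowerKernel s).aestronglyMeasurable

theorem integrableOn_prod_inversePowerKernel_sub {s : ℝ} (hs : 1 ≤ s)
    (hs' : s < finrank ℝ E + 1) {A B : Set E} (hA : μ A ≠ ⊤) (hB : μ B ≠ ⊤) :
    IntegrableOn (fun p : E × E ↦ inversePowerKernel s (p.1 - p.2)) (A ×ˢ B) (μ.prod μ) := by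
  have hdim : (0 : ℝ) < finrank ℝ E := by linarith
  have : Nontrivial E := nontrivial_of_finrank_pos (Nat.cast_pos.1 hdim)
  refine integrableOn_prod_comp_sub (C := 1) measurableSet_ball
    (measurable_inversePowerKernel s).aestronglyMeasurable
    (integrableOn_ball_inversePowerKernel hs' 1) (fun z hz ↦ ?_) hA hB
  exact norm_inversePowerKernel_le_one hs (by simpa using hz)

theorem no_net_self_force_general {s : ℝ} (hs : 1 ≤ s) (hs' : s < finrank ℝ E + 1)
    {B : Set E} (hB : μ B ≠ ⊤) :
    IntegrableOn (fun p : E × E ↦ inversePowerKernel s (p.1 - p.2)) (B ×ˢ B) (μ.prod μ) ∧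
      ∫ p in B ×ˢ B, inversePowerKernel s (p.1 - p.2) ∂μ.prod μ = 0 := by
  refine ⟨integrableOn_prod_inversePowerKernel_sub hs hs' hB hB,
    setIntegral_prod_self_eq_zero_of_swap_eq_neg (fun p ↦ ?_) B⟩
  rw [← inversePowerKernel_neg, neg_sub, Prod.fst_swap, Prod.snd_swap]

end InversePowerKernel

/-- A body exerts no net gravitational force on itself: for any bounded measurable
`B ⊂ ℝ³`, the vector field `(x,y) ↦ (x-y)/‖x-y‖³` is Bochner integrable on `B × B`
and its integral vanishes. -/
theorem no_net_self_force (B : Set (EuclideanSpace ℝ (Fin 3)))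
    (hBm : MeasurableSet B) (hBb : Bornology.IsBounded B) :
    IntegrableOn
      (fun p : EuclideanSpace ℝ (Fin 3) × EuclideanSpace ℝ (Fin 3) =>
        (‖p.1 - p.2‖ ^ 3)⁻¹ • (p.1 - p.2))
      (B ×ˢ B) ∧
    (∫ p in B ×ˢ B,
        (‖p.1 - p.2‖ ^ 3)⁻¹ • (p.1 - p.2)
          : EuclideanSpace ℝ (Fin 3))
      = 0 := by
  simpa [inversePowerKernel, Measure.volume_eq_prod] using
    no_net_self_force_general (s := 3) (by norm_num) (by norm_num) hBb.measure_lt_top.ne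
end

section
/- Let R > 0 and let S_R := {x ∈ ℝ³ : ‖x‖ = R} carry the 2-dimensional Hausdorff measure μH². Fix e ∈ ℝ³ and let Ω(x) := e × x be the rotational vector field about e; for a function f that is continuously differentiable on a neighborhood of S_R, write (Ωf)(x) := (Df)(x)[e × x]. Then for all such f, g : ℝ³ → ℝ one has ∫_{S_R} f(x)·(Ωg)(x) dμH²(x) = −∫_{S_R} (Ωf)(x)·g(x) dμH²(x); that is, Ω is skew-adjoint (divergence free) on the round sphere. -/
open MeasureTheory

/-!
The flow `exp (tA)` of a linear vector field `x ↦ A x` with `⟪x, A x⟫ = 0` consists of isometries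
fixing the origin, so it preserves every sphere `S` about the origin and its Hausdorff measure.
Hence `∫_S h ∘ exp (tA)` does not depend on `t`; differentiating at `t = 0` gives
`∫_S Dh(x)[A x] = 0`, and `h = f g` yields the claim by the Leibniz rule. Differentiation under the
integral needs the sphere to have finite measure: inverse stereographic projection is `C¹`, hence
Lipschitz on a closed ball, and two such images, from opposite poles, cover the sphere.
-/

open Metric Module Set
open scoped RealInnerProductSpace

section MeasurePreservingFlow

theorem setIntegral_comp_flow {τ X F : Type*} [TopologicalSpace τ] [AddGroup τ]
    [TopologicalSpace X] [MeasurableSpace X] [BorelSpace X] [NormedAddCommGroup F]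
    [NormedSpace ℝ F] {μ : Measure X} {φ : Flow τ X} {S : Set X}
    (hμ : ∀ t, MeasurePreserving (φ t) μ μ) (hS : IsInvariant φ S) (h : X → F) (t : τ) :
    ∫ x in S, h (φ t x) ∂μ = ∫ x in S, h x ∂μ := by
  have preimage_eq : φ t ⁻¹' S = S := by
    rw [← neg_neg t, ← φ.image_eq_preimage_symm]
    exact (φ.isInvariant_iff_image_eq S).mp hS (-t)
  simpa only [preimage_eq] using
    (hμ t).setIntegral_preimage_emb (φ.toHomeomorph t).measurableEmbedding h S

variable {E F : Type*} [NormedAddCommGroup E] [NormedSpace ℝ E] [NormedAddCommGroup F]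
  [NormedSpace ℝ F] {V : E → E} {S : Set E}

theorem continuousOn_fderiv_apply {h : E → F} (hV : ContinuousOn V S)
    (hh : ∀ x ∈ S, ContDiffAt ℝ 1 h x) : ContinuousOn (fun x ↦ fderiv ℝ h x (V x)) S :=
  fun x hx ↦ ((hh x hx).continuousAt_fderiv one_ne_zero).continuousWithinAt.clm_apply (hV x hx)

variable [MeasurableSpace E] [BorelSpace E] {μ : Measure E} {φ : Flow ℝ E}

theorem hasDerivAt_setIntegral_comp_flow {h : E → F} (hφS : IsInvariant φ S)
    (hφV : ∀ x ∈ S, IsIntegralCurve (φ · x) fun _ ↦ V) (hV : ContinuousOn V S)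
    (hS : IsCompact S) (hμS : μ S ≠ ⊤) (hh : ∀ x ∈ S, ContDiffAt ℝ 1 h x) :
    HasDerivAt (fun t ↦ ∫ x in S, h (φ t x) ∂μ) (∫ x in S, fderiv ℝ h x (V x) ∂μ) 0 := by
  have integrableOn {k : E → F} (hk : ContinuousOn k S) : IntegrableOn k S μ :=
    hk.integrableOn_of_subset_isCompact hS hS.measurableSet subset_rfl hμS
  have continuousOn_comp (t : ℝ) : ContinuousOn (fun x ↦ h (φ t x)) S :=
    ContinuousOn.comp (fun x hx ↦ (hh x hx).continuousAt.continuousWithinAt)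
      (φ.continuous_toFun t).continuousOn (hφS t)
  have continuousOn_deriv := continuousOn_fderiv_apply hV hh
  obtain ⟨C, hC⟩ := hS.exists_bound_of_continuousOn continuousOn_deriv
  have hderiv := hasDerivAt_integral_of_dominated_loc_of_deriv_le (μ := μ.restrict S)
    (F := fun t x ↦ h (φ t x)) (F' := fun t x ↦ fderiv ℝ h (φ t x) (V (φ t x)))
    (x₀ := (0 : ℝ)) (bound := fun _ ↦ C) Filter.univ_mem
    (.of_forall fun t ↦ (integrableOn (continuousOn_comp t)).aestronglyMeasurable)
    (integrableOn (continuousOn_comp 0))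
    (by simpa only [φ.map_zero_apply] using (integrableOn continuousOn_deriv).aestronglyMeasurable)
    (ae_restrict_of_forall_mem hS.measurableSet fun x hx t _ ↦ hC _ (hφS t hx))
    (integrableOn_const hμS)
    (ae_restrict_of_forall_mem hS.measurableSet fun x hx t _ ↦
      ((hh _ (hφS t hx)).differentiableAt one_ne_zero).hasFDerivAt.comp_hasDerivAt t (hφV x hx t))
  simpa only [φ.map_zero_apply] using hderiv.2

theorem setIntegral_fderiv_apply_eq_zero_of_flow {h : E → F}
    (hμ : ∀ t, MeasurePreserving (φ t) μ μ) (hφS : IsInvariant φ S)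
    (hφV : ∀ x ∈ S, IsIntegralCurve (φ · x) fun _ ↦ V) (hV : ContinuousOn V S)
    (hS : IsCompact S) (hμS : μ S ≠ ⊤) (hh : ∀ x ∈ S, ContDiffAt ℝ 1 h x) :
    ∫ x in S, fderiv ℝ h x (V x) ∂μ = 0 := by
  have hderiv := hasDerivAt_setIntegral_comp_flow hφS hφV hV hS hμS hh
  simp only [setIntegral_comp_flow hμ hφS] at hderiv
  exact hderiv.unique (hasDerivAt_const _ _)

theorem setIntegral_mul_fderiv_apply_eq_neg_of_flow {f g : E → ℝ}
    (hμ : ∀ t, MeasurePreserving (φ t) μ μ) (hφS : IsInvariant φ S)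
    (hφV : ∀ x ∈ S, IsIntegralCurve (φ · x) fun _ ↦ V) (hV : ContinuousOn V S)
    (hS : IsCompact S) (hμS : μ S ≠ ⊤)
    (hf : ∀ x ∈ S, ContDiffAt ℝ 1 f x) (hg : ∀ x ∈ S, ContDiffAt ℝ 1 g x) :
    ∫ x in S, f x * fderiv ℝ g x (V x) ∂μ = -∫ x in S, fderiv ℝ f x (V x) * g x ∂μ := by
  have integrableOn_mul {k l : E → ℝ} (hk : ContinuousOn k S) (hl : ContinuousOn l S) :
      IntegrableOn (fun x ↦ k x * l x) S μ :=
    (hk.mul hl).integrableOn_of_subset_isCompact hS hS.measurableSet subset_rfl hμS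
  have continuousOn {k : E → ℝ} (hk : ∀ x ∈ S, ContDiffAt ℝ 1 k x) : ContinuousOn k S :=
    fun x hx ↦ (hk x hx).continuousAt.continuousWithinAt
  have leibniz : EqOn (fun x ↦ fderiv ℝ (fun y ↦ f y * g y) x (V x))
      (fun x ↦ f x * fderiv ℝ g x (V x) + fderiv ℝ f x (V x) * g x) S := fun x hx ↦ by
    simp [fderiv_fun_mul ((hf x hx).differentiableAt one_ne_zero)
      ((hg x hx).differentiableAt one_ne_zero), mul_comm]
  rw [eq_neg_iff_add_eq_zero,
    ← integral_add (integrableOn_mul (continuousOn hf) (continuousOn_fderiv_apply hV hg))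
      (integrableOn_mul (continuousOn_fderiv_apply hV hf) (continuousOn hg)),
    ← setIntegral_congr_fun hS.measurableSet leibniz]
  exact setIntegral_fderiv_apply_eq_zero_of_flow hμ hφS hφV hV hS hμS
    fun x hx ↦ (hf x hx).mul (hg x hx)

end MeasurePreservingFlow

section ExpFlow

open NormedSpace

section NormedSpace

variable {E : Type*} [NormedAddCommGroup E] [NormedSpace ℝ E] [CompleteSpace E]

/-- The flow `t ↦ exp (t A)` of the linear vector field `x ↦ A x`. -/
noncomputable def expFlow (A : E →L[ℝ] E) : Flow ℝ E where
  toFun t x := exp (t • A) x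
  cont' := ((differentiable_exp_smul_const ℝ A).continuous.comp continuous_fst).clm_apply
    continuous_snd
  map_add' s t x := by
    let : NormedAlgebra ℚ (E →L[ℝ] E) := .restrictScalars ℚ ℝ _
    rw [add_smul, exp_add_of_commute (((Commute.refl A).smul_left s).smul_right t)]
    rfl
  map_zero' x := by simp

theorem isIntegralCurve_expFlow (A : E →L[ℝ] E) (x : E) :
    IsIntegralCurve (expFlow A · x) fun _ ↦ A := fun t ↦ by
  simpa [expFlow] using (hasDerivAt_exp_smul_const' A t).clm_apply (hasDerivAt_const t x)

end NormedSpace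

variable {E : Type*} [NormedAddCommGroup E] [InnerProductSpace ℝ E] [CompleteSpace E]
  {A : E →L[ℝ] E}

theorem norm_expFlow_apply (hA : ∀ x, ⟪x, A x⟫ = 0) (t : ℝ) (x : E) : ‖expFlow A t x‖ = ‖x‖ := by
  have hderiv (s : ℝ) : HasDerivAt (fun s ↦ ‖expFlow A s x‖ ^ 2) 0 s := by
    simpa [hA] using (isIntegralCurve_expFlow A x s).norm_sq
  have hconst : ‖expFlow A t x‖ ^ 2 = ‖expFlow A 0 x‖ ^ 2 :=
    is_const_of_deriv_eq_zero (fun s ↦ (hderiv s).differentiableAt) (fun s ↦ (hderiv s).deriv) t 0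
  rw [(expFlow A).map_zero_apply] at hconst
  exact (sq_eq_sq₀ (norm_nonneg _) (norm_nonneg _)).mp hconst

theorem isometry_expFlow (hA : ∀ x, ⟪x, A x⟫ = 0) (t : ℝ) : Isometry (expFlow A t) :=
  AddMonoidHomClass.isometry_of_norm (exp (t • A)) (norm_expFlow_apply hA t)

theorem isInvariant_expFlow_sphere (hA : ∀ x, ⟪x, A x⟫ = 0) (r : ℝ) :
    IsInvariant (expFlow A) (sphere 0 r) := fun t x hx ↦ by
  rwa [mem_sphere_zero_iff_norm, norm_expFlow_apply hA, ← mem_sphere_zero_iff_norm]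

theorem measurePreserving_expFlow_hausdorffMeasure [MeasurableSpace E] [BorelSpace E]
    (hA : ∀ x, ⟪x, A x⟫ = 0) (d t : ℝ) : MeasurePreserving (expFlow A t) μH[d] μH[d] :=
  (IsometryEquiv.mk ((expFlow A).toHomeomorph t).toEquiv
    (isometry_expFlow hA t)).measurePreserving_hausdorffMeasure d

end ExpFlow

section HausdorffMeasureSphere

theorem hausdorffMeasure_image_lt_top_of_contDiffOn {E F : Type*} [NormedAddCommGroup E]
    [NormedSpace ℝ E] [FiniteDimensional ℝ E] [MeasurableSpace E] [BorelSpace E]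
    [NormedAddCommGroup F] [NormedSpace ℝ F] [MeasurableSpace F] [BorelSpace F]
    {f : E → F} {K : Set E} (hf : ContDiffOn ℝ 1 f K) (hKconv : Convex ℝ K) (hK : IsCompact K) :
    μH[finrank ℝ E] (f '' K) < ⊤ := by
  obtain ⟨C, hC⟩ := hf.exists_lipschitzOnWith one_ne_zero hKconv hK
  exact (hC.hausdorffMeasure_image_le (Nat.cast_nonneg _)).trans_lt <|
    ENNReal.mul_lt_top (ENNReal.rpow_lt_top_of_nonneg (Nat.cast_nonneg _) ENNReal.coe_ne_top)
      hK.measure_lt_top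

variable {E : Type*} [NormedAddCommGroup E] [InnerProductSpace ℝ E]

theorem hemisphere_subset_image_stereoInvFunAux {v : E} (hv : ‖v‖ = 1) :
    sphere 0 1 ∩ {x | ⟪v, x⟫ ≤ 0} ⊆
      (fun w : (ℝ ∙ v)ᗮ ↦ stereoInvFunAux v w) '' closedBall 0 2 := by
  rintro x ⟨hx, hvx : ⟪v, x⟫ ≤ 0⟩
  have hxv : x ≠ v := by
    rintro rfl
    norm_num [hv] at hvx
  refine ⟨stereoToFun v x, ?_, congrArg Subtype.val (stereo_left_inv hv (x := ⟨x, hx⟩) hxv)⟩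
  have hscale : ‖2 / (1 - ⟪v, x⟫)‖ ≤ 2 := by
    rw [Real.norm_of_nonneg (by bound)]
    exact div_le_self zero_le_two (by linarith)
  have hproj : ‖(ℝ ∙ v)ᗮ.orthogonalProjectionOnto x‖ ≤ 1 :=
    ((ℝ ∙ v)ᗮ.norm_orthogonalProjectionOnto_apply_le x).trans_eq (by simpa using hx)
  rw [mem_closedBall_zero_iff, stereoToFun_apply, norm_smul]
  exact (mul_le_mul hscale hproj (norm_nonneg _) zero_le_two).trans_eq (mul_one 2)

variable [MeasurableSpace E] [BorelSpace E] {n : ℕ} [Fact (finrank ℝ E = n + 1)]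

theorem hausdorffMeasure_hemisphere_lt_top {v : E} (hv : ‖v‖ = 1) :
    μH[n] (sphere (0 : E) 1 ∩ {x | ⟪v, x⟫ ≤ 0}) < ⊤ := by
  have : FiniteDimensional ℝ E := .of_fact_finrank_eq_succ n
  have finrank_eq : finrank ℝ (ℝ ∙ v)ᗮ = n :=
    Submodule.finrank_orthogonal_span_singleton (norm_ne_zero_iff.mp (hv.trans_ne one_ne_zero))
  have contDiff : ContDiff ℝ 1 fun w : (ℝ ∙ v)ᗮ ↦ stereoInvFunAux v w :=
    contDiff_stereoInvFunAux.comp (ℝ ∙ v)ᗮ.subtypeL.contDiff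
  rw [← finrank_eq]
  exact (measure_mono (hemisphere_subset_image_stereoInvFunAux hv)).trans_lt <|
    hausdorffMeasure_image_lt_top_of_contDiffOn contDiff.contDiffOn (convex_closedBall 0 2)
      (isCompact_closedBall 0 2)

theorem hausdorffMeasure_unitSphere_lt_top : μH[n] (sphere (0 : E) 1) < ⊤ := by
  have : Nontrivial E := nontrivial_of_finrank_eq_succ (Fact.out : finrank ℝ E = n + 1)
  obtain ⟨v, hv⟩ := exists_norm_eq E zero_le_one
  have cover : sphere (0 : E) 1 ⊆
      (sphere 0 1 ∩ {x | ⟪v, x⟫ ≤ 0}) ∪ (sphere 0 1 ∩ {x | ⟪-v, x⟫ ≤ 0}) := fun x hx ↦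
    (le_total ⟪v, x⟫ 0).imp (fun h ↦ ⟨hx, h⟩) fun h ↦ ⟨hx, by simpa using h⟩
  exact (measure_mono cover).trans_lt <| measure_union_lt_top
    (hausdorffMeasure_hemisphere_lt_top hv)
    (hausdorffMeasure_hemisphere_lt_top ((norm_neg v).trans hv))

theorem hausdorffMeasure_sphere_lt_top (c : E) (r : ℝ) : μH[n] (sphere c r) < ⊤ := by
  have : Nontrivial E := nontrivial_of_finrank_eq_succ (Fact.out : finrank ℝ E = n + 1)
  obtain hr | hr := lt_or_ge r 0
  · simp [sphere_eq_empty_of_neg hr]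
  have image_eq : (c + r • ·) '' sphere (0 : E) 1 = sphere c r := by
    rw [← image_image (c + ·) (r • ·), image_smul, smul_sphere r 0 zero_le_one]
    simp [abs_of_nonneg hr]
  have lipschitz : LipschitzWith ‖r‖₊ fun x : E ↦ c + r • x := by
    simpa using (LipschitzWith.const c).add (lipschitzWith_smul (β := E) r)
  rw [← image_eq]
  exact (lipschitz.hausdorffMeasure_image_le (Nat.cast_nonneg n) _).trans_lt <|
    ENNReal.mul_lt_top (ENNReal.rpow_lt_top_of_nonneg (Nat.cast_nonneg n) ENNReal.coe_ne_top)
      hausdorffMeasure_unitSphere_lt_top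

end HausdorffMeasureSphere

/-- The vector field `x ↦ e × x` as a continuous linear map. -/
noncomputable def cross3L (e : EuclideanSpace ℝ (Fin 3)) :
    EuclideanSpace ℝ (Fin 3) →L[ℝ] EuclideanSpace ℝ (Fin 3) :=
  LinearMap.toContinuousLinearMap
    { toFun := cross3 e
      map_add' x y := by ext i; fin_cases i <;> simp [cross3] <;> ring
      map_smul' c x := by ext i; fin_cases i <;> simp [cross3] <;> ring }

theorem inner_self_cross3 (e x : EuclideanSpace ℝ (Fin 3)) : ⟪x, cross3 e x⟫ = 0 := by
  simp only [cross3, PiLp.continuousLinearEquiv_symm_apply, PiLp.inner_apply, RCLike.inner_apply,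
    Real.ringHom_apply, Fin.sum_univ_three, Matrix.cons_val_zero, Matrix.cons_val_one,
    Matrix.cons_val]
  ring

theorem rotation_field_skew_adjoint_on_sphere_general {E : Type*} [NormedAddCommGroup E]
    [InnerProductSpace ℝ E] [MeasurableSpace E] [BorelSpace E] {n : ℕ}
    [Fact (finrank ℝ E = n + 1)] {A : E →L[ℝ] E} (hA : ∀ x, ⟪x, A x⟫ = 0) (r : ℝ) {f g : E → ℝ}
    (hf : ∀ x ∈ sphere 0 r, ContDiffAt ℝ 1 f x) (hg : ∀ x ∈ sphere 0 r, ContDiffAt ℝ 1 g x) :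
    ∫ x in sphere (0 : E) r, f x * fderiv ℝ g x (A x) ∂μH[n] =
      -∫ x in sphere (0 : E) r, fderiv ℝ f x (A x) * g x ∂μH[n] := by
  have : FiniteDimensional ℝ E := .of_fact_finrank_eq_succ n
  have : CompleteSpace E := FiniteDimensional.complete ℝ E
  exact setIntegral_mul_fderiv_apply_eq_neg_of_flow
    (measurePreserving_expFlow_hausdorffMeasure hA n) (isInvariant_expFlow_sphere hA r)
    (fun x _ ↦ isIntegralCurve_expFlow A x) A.continuous.continuousOn
    (isCompact_sphere 0 r) (hausdorffMeasure_sphere_lt_top 0 r).ne hf hg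

/-- The rotational vector field `Ω(x) = e × x` is skew-adjoint (divergence free) on the
round sphere `S_R`: for `f`, `g` continuously differentiable on a neighborhood of `S_R`,
`∫_{S_R} f · (Ωg) dμH² = -∫_{S_R} (Ωf) · g dμH²`, with `(Ωf)(x) = Df(x)[e × x]`. -/
theorem rotation_field_skew_adjoint_on_sphere
    (R : ℝ) (hR : 0 < R) (e : EuclideanSpace ℝ (Fin 3))
    (f g : EuclideanSpace ℝ (Fin 3) → ℝ)
    (U : Set (EuclideanSpace ℝ (Fin 3))) (hU : IsOpen U)
    (hsub : Metric.sphere (0 : EuclideanSpace ℝ (Fin 3)) R ⊆ U)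
    (hf : ContDiffOn ℝ 1 f U) (hg : ContDiffOn ℝ 1 g U) :
    ∫ x in Metric.sphere (0 : EuclideanSpace ℝ (Fin 3)) R,
        f x * fderiv ℝ g x (cross3 e x)
        ∂(MeasureTheory.Measure.hausdorffMeasure 2)
      = - ∫ x in Metric.sphere (0 : EuclideanSpace ℝ (Fin 3)) R,
          (fderiv ℝ f x (cross3 e x)) * g x
          ∂(MeasureTheory.Measure.hausdorffMeasure 2) := by
  have : Fact (finrank ℝ (EuclideanSpace ℝ (Fin 3)) = 2 + 1) := ⟨by simp⟩
  have contDiffAt {k : EuclideanSpace ℝ (Fin 3) → ℝ} (hk : ContDiffOn ℝ 1 k U) :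
      ∀ x ∈ sphere 0 R, ContDiffAt ℝ 1 k x := fun x hx ↦ hk.contDiffAt (hU.mem_nhds (hsub hx))
  exact_mod_cast rotation_field_skew_adjoint_on_sphere_general (A := cross3L e)
    (inner_self_cross3 e) R (contDiffAt hf) (contDiffAt hg)
end
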